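/- arXiv:2307.15892 — 3 statements merged into one kernel-verified Lean document; each statement's English description precedes it below -/
import Mathlib

section
/- Let f: ℝ^d → ℝ be differentiable with a global minimizer x* (so f(x*) ≤ f(x) for all x and ∇f(x*) = 0), and let μ > 0. If f is μ-strongly quasi-convex, then for every x ∈ ℝ^d: ‖∇f(x)‖ ≥ μ·‖x − x*‖. -/
open RealInnerProductSpace

/-- Lemma 4 of the paper.
If `f : ℝ^d → ℝ` is differentiable with global minimizer `x*` (so `∇f(x*) = 0`) and
`μ`-strongly quasi-convex with `μ > 0`, then `‖∇f(x)‖ ≥ μ ‖x − x*‖` for every `x`. -/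
theorem stmt3 {d : ℕ} (f : EuclideanSpace ℝ (Fin d) → ℝ) (hf : Differentiable ℝ f)
    (xstar : EuclideanSpace ℝ (Fin d)) (hmin : ∀ x, f xstar ≤ f x)
    (hgrad0 : gradient f xstar = 0) (μ : ℝ) (hμ : 0 < μ)
    (hsqc : ∀ x, f x + ⟪gradient f x, xstar - x⟫ + μ / 2 * ‖xstar - x‖ ^ 2 ≤ f xstar) :
    ∀ x, μ * ‖x - xstar‖ ≤ ‖gradient f x‖ := by
  intro x
  set v := x - xstar with hv
  have hg : ∀ t : ℝ, HasDerivAt (fun t : ℝ => f (xstar + t • v))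
      ⟪gradient f (xstar + t • v), v⟫ t := by
    intro t
    have h1 := (hf (xstar + t • v)).hasGradientAt.hasFDerivAt
    have h2 : HasDerivAt (fun t : ℝ => xstar + t • v) v t := by
      simpa using ((hasDerivAt_id t).smul_const v).const_add xstar
    have h3 := h1.comp_hasDerivAt t h2
    exact h3
  have hq : ∀ t : ℝ, f (xstar + t • v) - f xstar + μ / 2 * (t ^ 2 * ‖v‖ ^ 2)
      ≤ t * ⟪gradient f (xstar + t • v), v⟫ := by
    intro t
    have h := hsqc (xstar + t • v)
    have e : xstar - (xstar + t • v) = -(t • v) := by abel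
    rw [e, inner_neg_right, inner_smul_right, norm_neg, norm_smul, mul_pow, Real.norm_eq_abs,
      sq_abs] at h
    linarith
  have hd : ∀ t : ℝ, 0 < t → HasDerivAt
      (fun t : ℝ => (f (xstar + t • v) - f xstar) / t - μ / 2 * ‖v‖ ^ 2 * t)
      ((⟪gradient f (xstar + t • v), v⟫ * t - (f (xstar + t • v) - f xstar) * 1) / t ^ 2
        - μ / 2 * ‖v‖ ^ 2 * 1) t := by
    intro t ht
    exact (((hg t).sub_const _).div (hasDerivAt_id t) ht.ne').sub
      ((hasDerivAt_id t).const_mul _)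
  have hm : MonotoneOn
      (fun t : ℝ => (f (xstar + t • v) - f xstar) / t - μ / 2 * ‖v‖ ^ 2 * t) (Set.Ioi 0) := by
    apply monotoneOn_of_deriv_nonneg (convex_Ioi 0)
    · intro t ht
      exact (hd t ht).continuousAt.continuousWithinAt
    · intro t ht
      rw [interior_Ioi] at ht
      exact (hd t ht).differentiableAt.differentiableWithinAt
    · intro t ht
      rw [interior_Ioi] at ht
      have ht' : 0 < t := ht
      rw [(hd t ht).deriv, sub_nonneg, le_div_iff₀ (by positivity)]
      linarith [hq t]
  have key : μ / 2 * ‖v‖ ^ 2 ≤ f (xstar + (1 : ℝ) • v) - f xstar := by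
    have hlow : ∀ t : ℝ, 0 < t → t ≤ 1 →
        -(μ / 2 * ‖v‖ ^ 2 * t) ≤ f (xstar + (1 : ℝ) • v) - f xstar - μ / 2 * ‖v‖ ^ 2 := by
      intro t ht h1
      have h := hm (Set.mem_Ioi.2 ht) (Set.mem_Ioi.2 one_pos) h1
      simp only [div_one, mul_one] at h
      have : 0 ≤ (f (xstar + t • v) - f xstar) / t :=
        div_nonneg (sub_nonneg.2 (hmin _)) ht.le
      linarith
    by_contra! hc
    set C := μ / 2 * ‖v‖ ^ 2 with hC
    set a := f (xstar + (1 : ℝ) • v) - f xstar with ha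
    have ha0 : 0 ≤ a := sub_nonneg.2 (hmin _)
    have hCpos : 0 < C := by linarith
    have h := hlow ((C - a) / (2 * C)) (div_pos (by linarith) (by linarith))
      ((div_le_one (by linarith)).2 (by linarith))
    have e : C * ((C - a) / (2 * C)) = (C - a) / 2 := by field_simp
    rw [e] at h
    linarith
  have h1 := hq 1
  have e : xstar + (1 : ℝ) • v = x := by simp [hv]
  rw [e] at h1 key
  have h2 := real_inner_le_norm (gradient f x) v
  rcases (norm_nonneg v).eq_or_lt with h0 | h0
  · rw [← h0]; simp
  · refine le_of_mul_le_mul_right ?_ h0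
    nlinarith
end

section
/- Let A be an invertible real d×d matrix and U a symmetric positive definite real d×d matrix. Then the matrix AᵀU⁻¹A is invertible, and for all θ, b ∈ ℝ^d: (AᵀU⁻¹A)⁻¹·AᵀU⁻¹·(Aθ + b) = A⁻¹·(Aθ + b). -/
open Matrix

/-- the paper's Newton-invariance claim, Section 2.3.
For `A` invertible and `U` symmetric positive definite, the matrix `AᵀU⁻¹A` is
invertible and `(AᵀU⁻¹A)⁻¹ AᵀU⁻¹ (Aθ + b) = A⁻¹(Aθ + b)` for all `θ, b`:
the Newton update direction is invariant in the choice of the preconditioner `U`. -/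
theorem stmt11 {d : ℕ} (A U : Matrix (Fin d) (Fin d) ℝ)
    (hA : IsUnit A.det) (hU : U.PosDef) :
    IsUnit (Aᵀ * U⁻¹ * A).det ∧
      ∀ θ b : Fin d → ℝ,
        (Aᵀ * U⁻¹ * A)⁻¹.mulVec ((Aᵀ * U⁻¹).mulVec (A.mulVec θ + b))
          = A⁻¹.mulVec (A.mulVec θ + b) := by
  have hUd : IsUnit U.det := isUnit_iff_ne_zero.mpr hU.det_pos.ne'
  have hUi : IsUnit (U⁻¹).det := Matrix.isUnit_nonsing_inv_det U hUd
  have hM : IsUnit (Aᵀ * U⁻¹).det := by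
    rw [Matrix.det_mul, Matrix.det_transpose]
    exact hA.mul hUi
  refine ⟨?_, fun θ b => ?_⟩
  · rw [Matrix.det_mul]
    exact hM.mul hA
  · rw [Matrix.mulVec_mulVec, Matrix.mul_inv_rev (Aᵀ * U⁻¹) A, Matrix.mul_assoc,
      Matrix.nonsing_inv_mul _ hM, Matrix.mul_one]
end

section
/- Let γ ∈ ℝ, and let (φᵢ, φ′ᵢ, rᵢ) for i = 1, …, T₁ and (ψⱼ, ψ′ⱼ, sⱼ) for j = 1, …, T₂ be two finite collections of triples in ℝ^d × ℝ^d × ℝ. Define the TD errors δᵢ(θ) = rᵢ + γφ′ᵢᵀθ − φᵢᵀθ and εⱼ(θ) = sⱼ + γψ′ⱼᵀθ − ψⱼᵀθ, the empirical NEU loss N̂(θ) = Σᵢ Σⱼ (φᵢᵀψⱼ)·δᵢ(θ)·εⱼ(θ), and the matrices Ā₁ = Σᵢ φᵢ(γφ′ᵢ − φᵢ)ᵀ, Ā₂ = Σⱼ ψⱼ(γψ′ⱼ − ψⱼ)ᵀ with vectors b̄₁ = Σᵢ φᵢrᵢ, b̄₂ = Σⱼ ψⱼsⱼ. Then for every θ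 ∈ ℝ^d: ∇N̂(θ) = Ā₂ᵀ(Ā₁θ + b̄₁) + Ā₁ᵀ(Ā₂θ + b̄₂). -/
open Matrix

lemma aux_dot {d : ℕ} (v : Fin d → ℝ) (θ : EuclideanSpace ℝ (Fin d)) :
    HasFDerivAt (fun θ : EuclideanSpace ℝ (Fin d) => v ⬝ᵥ (WithLp.equiv 2 (Fin d → ℝ)) θ)
      (innerSL ℝ (WithLp.toLp 2 v)) θ := by
  have h := (innerSL ℝ (WithLp.toLp 2 v : EuclideanSpace ℝ (Fin d))).hasFDerivAt (x := θ)
  convert h using 1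
  funext x
  simp [EuclideanSpace.inner_eq_star_dotProduct, dotProduct_comm]

lemma aux_mul {d T : ℕ} (u w : Fin T → Fin d → ℝ) (x : Fin d → ℝ) :
    (∑ i, vecMulVec (u i) (w i)) *ᵥ x = ∑ i, (w i ⬝ᵥ x) • u i := by
  rw [Matrix.sum_mulVec]
  refine Finset.sum_congr rfl fun i _ => ?_
  rw [vecMulVec_mulVec]
  ext k
  simp [mul_comm]

lemma aux_tr {d : ℕ} (A : Matrix (Fin d) (Fin d) ℝ) (x y : Fin d → ℝ) :
    Aᵀ *ᵥ x ⬝ᵥ y = x ⬝ᵥ A *ᵥ y := by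
  rw [mulVec_transpose, dotProduct_mulVec]

/-- Section 4 of the paper: gradient of the empirical NEU loss.
The empirical NEU loss `N̂(θ) = ∑ᵢ ∑ⱼ (φᵢᵀψⱼ) δᵢ(θ) εⱼ(θ)` over two buffers has
gradient `∇N̂(θ) = Ā₂ᵀ(Ā₁θ + b̄₁) + Ā₁ᵀ(Ā₂θ + b̄₂)`, where
`Āₖ` are the (unnormalized) empirical feature-transition matrices and `b̄ₖ` the
empirical feature-reward vectors.  Here `ℝ^d` is `EuclideanSpace ℝ (Fin d)` and the
coercion `WithLp.equiv` mediates between it and plain vectors. -/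
theorem stmt13 {d : ℕ} (γ : ℝ) {T₁ T₂ : ℕ}
    (φ φ' : Fin T₁ → Fin d → ℝ) (r : Fin T₁ → ℝ)
    (ψ ψ' : Fin T₂ → Fin d → ℝ) (s : Fin T₂ → ℝ)
    (Nhat : EuclideanSpace ℝ (Fin d) → ℝ)
    (hN : Nhat = fun θ => ∑ i, ∑ j, (φ i ⬝ᵥ ψ j)
        * (r i + γ * (φ' i ⬝ᵥ (WithLp.equiv 2 (Fin d → ℝ)) θ)
            - φ i ⬝ᵥ (WithLp.equiv 2 (Fin d → ℝ)) θ)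
        * (s j + γ * (ψ' j ⬝ᵥ (WithLp.equiv 2 (Fin d → ℝ)) θ)
            - ψ j ⬝ᵥ (WithLp.equiv 2 (Fin d → ℝ)) θ))
    (A₁ A₂ : Matrix (Fin d) (Fin d) ℝ) (b₁ b₂ : Fin d → ℝ)
    (hA₁ : A₁ = ∑ i, vecMulVec (φ i) (γ • φ' i - φ i))
    (hA₂ : A₂ = ∑ j, vecMulVec (ψ j) (γ • ψ' j - ψ j))
    (hb₁ : b₁ = ∑ i, r i • φ i) (hb₂ : b₂ = ∑ j, s j • ψ j) :
    ∀ θ : EuclideanSpace ℝ (Fin d),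
      HasGradientAt Nhat
        ((WithLp.equiv 2 (Fin d → ℝ)).symm
          (A₂ᵀ.mulVec (A₁.mulVec ((WithLp.equiv 2 (Fin d → ℝ)) θ) + b₁)
            + A₁ᵀ.mulVec (A₂.mulVec ((WithLp.equiv 2 (Fin d → ℝ)) θ) + b₂))) θ := by
  intro θ
  subst hN
  rw [hasGradientAt_iff_hasFDerivAt]
  have key := HasFDerivAt.fun_sum (u := Finset.univ) fun (i : Fin T₁) _ =>
    HasFDerivAt.fun_sum (u := Finset.univ) fun (j : Fin T₂) _ =>
    (((((aux_dot (φ' i) θ).const_mul γ).const_add (r i)).sub (aux_dot (φ i) θ)).const_mul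
      (φ i ⬝ᵥ ψ j)).mul
    ((((aux_dot (ψ' j) θ).const_mul γ).const_add (s j)).sub (aux_dot (ψ j) θ))
  refine key.congr_fderiv ?_
  ext1 h
  have e1 : ∀ x, A₁ *ᵥ x = ∑ i, ((γ • φ' i - φ i) ⬝ᵥ x) • φ i := fun x => by
    rw [hA₁, aux_mul]
  have e2 : ∀ x, A₂ *ᵥ x = ∑ i, ((γ • ψ' i - ψ i) ⬝ᵥ x) • ψ i := fun x => by
    rw [hA₂, aux_mul]
  have hin : ∀ v : Fin d → ℝ, inner ℝ (WithLp.toLp 2 v : EuclideanSpace ℝ (Fin d)) h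
      = v ⬝ᵥ WithLp.ofLp h := fun v => by
    simp [EuclideanSpace.inner_eq_star_dotProduct, dotProduct_comm]
  have f1 : A₁ *ᵥ WithLp.ofLp θ + b₁
      = ∑ i, ((γ • φ' i - φ i) ⬝ᵥ WithLp.ofLp θ + r i) • φ i := by
    rw [e1, hb₁, ← Finset.sum_add_distrib]; simp only [add_smul]
  have f2 : A₂ *ᵥ WithLp.ofLp θ + b₂
      = ∑ i, ((γ • ψ' i - ψ i) ⬝ᵥ WithLp.ofLp θ + s i) • ψ i := by
    rw [e2, hb₂, ← Finset.sum_add_distrib]; simp only [add_smul]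
  have R : (InnerProductSpace.toDual ℝ (EuclideanSpace ℝ (Fin d)))
      ((WithLp.equiv 2 (Fin d → ℝ)).symm
          (A₂ᵀ.mulVec (A₁.mulVec ((WithLp.equiv 2 (Fin d → ℝ)) θ) + b₁)
            + A₁ᵀ.mulVec (A₂.mulVec ((WithLp.equiv 2 (Fin d → ℝ)) θ) + b₂))) h
      = (A₁ *ᵥ WithLp.ofLp θ + b₁) ⬝ᵥ A₂ *ᵥ WithLp.ofLp h
        + A₁ *ᵥ WithLp.ofLp h ⬝ᵥ (A₂ *ᵥ WithLp.ofLp θ + b₂) := by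
    rw [InnerProductSpace.toDual_apply_apply]
    refine (hin _).trans ?_
    rw [add_dotProduct, aux_tr, aux_tr, dotProduct_comm (A₁ *ᵥ WithLp.ofLp h)]
    rfl
  rw [R, f1, f2, e1, e2]
  simp only [sum_dotProduct]
  simp only [dotProduct_sum]
  simp only [smul_dotProduct, dotProduct_smul, ← Finset.sum_add_distrib, _root_.sum_apply]
  refine Finset.sum_congr rfl fun i _ => Finset.sum_congr rfl fun j _ => ?_
  simp only [_root_.add_apply, _root_.smul_apply,
    _root_.sub_apply, innerSL_apply_apply, hin, smul_eq_mul, sub_dotProduct,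
    smul_dotProduct, WithLp.equiv_apply, Pi.sub_apply]
  ring
end
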